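/- The coproduct Δ (given on generators by Δ(x) = x⊗x, Δ(y) = y⊗1 + x⊗y, Δ(θ) = θ⊗x + x⁻¹⊗θ) respects the defining relations of Ã in the Z₃-graded (braided) tensor product; concretely, the following three identities hold in the ℂ-module Ã ⊗ Ã (ordinary tensor product of ℂ-modules, with the braiding phases written out explicitly): (i) xy⊗x + x²⊗xy = q(yx⊗x) + q(x²⊗yx); (ii) xθ⊗x² + 1⊗xθ = q(θx⊗x²) + q(1⊗θx); (iii) yθ⊗x + yx⁻¹⊗θ + q²(xθ⊗yx) + 1⊗yθ = q²(θy⊗x) + q²(θx⊗xy) + q(x⁻¹y⊗θ) + q²(1⊗θy). -/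

import Mathlib

/-!
`Ã`: the extended algebra of functions on the Z₃-graded quantum superspace,
the unital associative ℂ-algebra with generators `x`, `x⁻¹`, `y`, `θ`,
quotient of the free algebra by the two-sided ideal generated by
`x·x⁻¹ − 1`, `x⁻¹·x − 1`, `xy − q·yx`, `xθ − q·θx`, `yθ − q²·θy`, `y³`, `θ³`.
-/

noncomputable section

inductive Gen : Type
  | x | xinv | y | th

abbrev FA : Type := FreeAlgebra ℂ Gen

def Xf : FA := FreeAlgebra.ι ℂ Gen.x
def XIf : FA := FreeAlgebra.ι ℂ Gen.xinv
def Yf : FA := FreeAlgebra.ι ℂ Gen.y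
def Tf : FA := FreeAlgebra.ι ℂ Gen.th

/-- The defining relations of `Ã`. -/
inductive QRel (q : ℂ) : FA → FA → Prop
  | xxi : QRel q (Xf * XIf) 1
  | xix : QRel q (XIf * Xf) 1
  | xy : QRel q (Xf * Yf) (q • (Yf * Xf))
  | xth : QRel q (Xf * Tf) (q • (Tf * Xf))
  | yth : QRel q (Yf * Tf) ((q ^ 2) • (Tf * Yf))
  | ycube : QRel q (Yf ^ 3) 0
  | thcube : QRel q (Tf ^ 3) 0

/-- The extended algebra `Ã` of functions on the Z₃-graded quantum superspace. -/
abbrev Atl (q : ℂ) : Type := RingQuot (QRel q)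

def Xg (q : ℂ) : Atl q := RingQuot.mkAlgHom ℂ (QRel q) Xf
def XIg (q : ℂ) : Atl q := RingQuot.mkAlgHom ℂ (QRel q) XIf
def Yg (q : ℂ) : Atl q := RingQuot.mkAlgHom ℂ (QRel q) Yf
def Tg (q : ℂ) : Atl q := RingQuot.mkAlgHom ℂ (QRel q) Tf

open scoped TensorProduct

theorem Xg_mul_XIg (q : ℂ) : Xg q * XIg q = 1 := by
  simpa only [Xg, XIg, map_mul, map_one] using
    RingQuot.mkAlgHom_rel ℂ (QRel.xxi (q := q))

theorem XIg_mul_Xg (q : ℂ) : XIg q * Xg q = 1 := by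
  simpa only [Xg, XIg, map_mul, map_one] using
    RingQuot.mkAlgHom_rel ℂ (QRel.xix (q := q))

theorem Xg_mul_Yg (q : ℂ) : Xg q * Yg q = q • (Yg q * Xg q) := by
  simpa only [Xg, Yg, map_mul, map_smul] using
    RingQuot.mkAlgHom_rel ℂ (QRel.xy (q := q))

theorem Xg_mul_Tg (q : ℂ) : Xg q * Tg q = q • (Tg q * Xg q) := by
  simpa only [Xg, Tg, map_mul, map_smul] using
    RingQuot.mkAlgHom_rel ℂ (QRel.xth (q := q))

theorem Yg_mul_Tg (q : ℂ) : Yg q * Tg q = (q ^ 2) • (Tg q * Yg q) := by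
  simpa only [Yg, Tg, map_mul, map_smul] using
    RingQuot.mkAlgHom_rel ℂ (QRel.yth (q := q))

theorem Yg_mul_XIg (q : ℂ) : Yg q * XIg q = q • (XIg q * Yg q) := by
  calc Yg q * XIg q = XIg q * (Xg q * Yg q) * XIg q := by
        rw [← mul_assoc, XIg_mul_Xg, one_mul]
    _ = q • (XIg q * Yg q) := by
        rw [Xg_mul_Yg, mul_smul_comm, smul_mul_assoc, mul_assoc, mul_assoc, Xg_mul_XIg, mul_one]

/-- The coproduct `Δ(x) = x⊗x`, `Δ(y) = y⊗1 + x⊗y`, `Δ(θ) = θ⊗x + x⁻¹⊗θ`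
respects the defining relations of `Ã` in the Z₃-graded tensor product: the
identities `Δ(x)Δ(y) = qΔ(y)Δ(x)`, `Δ(x)Δ(θ) = qΔ(θ)Δ(x)`,
`Δ(y)Δ(θ) = q²Δ(θ)Δ(y)` hold in `Ã ⊗[ℂ] Ã`, with all braiding phases written
out explicitly. -/
theorem coproduct_respects_relations (q : ℂ) (hq3 : q ^ 3 = 1) (hq1 : q ≠ 1) :
    ((Xg q * Yg q) ⊗ₜ[ℂ] Xg q + (Xg q * Xg q) ⊗ₜ[ℂ] (Xg q * Yg q)
        = q • ((Yg q * Xg q) ⊗ₜ[ℂ] Xg q) + q • ((Xg q * Xg q) ⊗ₜ[ℂ] (Yg q * Xg q))) ∧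
    ((Xg q * Tg q) ⊗ₜ[ℂ] (Xg q * Xg q) + (1 : Atl q) ⊗ₜ[ℂ] (Xg q * Tg q)
        = q • ((Tg q * Xg q) ⊗ₜ[ℂ] (Xg q * Xg q)) + q • ((1 : Atl q) ⊗ₜ[ℂ] (Tg q * Xg q))) ∧
    ((Yg q * Tg q) ⊗ₜ[ℂ] Xg q + (Yg q * XIg q) ⊗ₜ[ℂ] Tg q
        + (q ^ 2) • ((Xg q * Tg q) ⊗ₜ[ℂ] (Yg q * Xg q)) + (1 : Atl q) ⊗ₜ[ℂ] (Yg q * Tg q)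
        = (q ^ 2) • ((Tg q * Yg q) ⊗ₜ[ℂ] Xg q) + (q ^ 2) • ((Tg q * Xg q) ⊗ₜ[ℂ] (Xg q * Yg q))
          + q • ((XIg q * Yg q) ⊗ₜ[ℂ] Tg q) + (q ^ 2) • ((1 : Atl q) ⊗ₜ[ℂ] (Tg q * Yg q))) := by
  refine ⟨?_, ?_, ?_⟩
  · simp only [Xg_mul_Yg, TensorProduct.smul_tmul', TensorProduct.tmul_smul]
  · simp only [Xg_mul_Tg, TensorProduct.smul_tmul', TensorProduct.tmul_smul]
  · simp only [Yg_mul_Tg, Yg_mul_XIg, Xg_mul_Tg, Xg_mul_Yg, ← TensorProduct.smul_tmul',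
      TensorProduct.tmul_smul]
    module
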